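/- Fix an integer n ≥ 1. Let Ω₁ ∈ τ_s(ℍ_s^n) be real-path-connected, let Ω₂ ∈ τ_s(ℍ_s^n) be Ω₁-stem-preserving, and let f : Ω₁ → ℍ and g : Ω₂ → ℍ be path-slice. Then for every γ ∈ 𝒫(ℂ^n, Ω₁), every I ∈ 𝕊(Ω₁, γ), every r with 0 < r < r^I_{γ,Ω₁}, and every z ∈ B_{ℂ^n}(γ(1), r), one has (f*g)(Ψ_i^I(z)) = (f(Ψ_i^I(z)), I·f(Ψ_i^I(z)))·(F_{Ω₁}^g ∘ 𝓛_γ)(z). -/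

import Mathlib

open scoped ENNReal NNReal

noncomputable section

/-- The real quaternions. -/
abbrev ℍ := Quaternion ℝ

/-- The set `𝕊` of imaginary units of the quaternions. -/
def QS : Set ℍ := {I | I ^ 2 = -1}

/-- `Ψ_i^I : ℂ^n → ℂ_I^n ⊆ ℍ^n`, sending `x + y i` to `x + y I` componentwise. -/
def PsiI (n : ℕ) (I : ℍ) (z : Fin n → ℂ) : Fin n → ℍ :=
  fun ℓ => algebraMap ℝ ℍ (z ℓ).re + (z ℓ).im • I

/-- The slice `ℂ_I^n = (ℝ + ℝ I)^n ⊆ ℍ^n`. -/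
def sliceCn (n : ℕ) (I : ℍ) : Set (Fin n → ℍ) := Set.range (PsiI n I)

/-- The weakly slice cone `ℍ_s^n = ⋃_{I ∈ 𝕊} ℂ_I^n`. -/
def weakSliceCone (n : ℕ) : Set (Fin n → ℍ) := ⋃ I ∈ QS, sliceCn n I

/-- `Ω` is slice open (i.e. `Ω ∈ τ_s(ℍ_s^n)`): `Ω ⊆ ℍ_s^n` and each slice
`Ω_I = Ω ∩ ℂ_I^n` is open in `ℂ_I^n`, encoded via the homeomorphism `Ψ_i^I`. -/
def sliceOpen (n : ℕ) (Ω : Set (Fin n → ℍ)) : Prop :=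
  Ω ⊆ weakSliceCone n ∧ ∀ I ∈ QS, IsOpen (PsiI n I ⁻¹' Ω)

/-- The set `𝒫(ℂ^n)` of continuous paths `[0,1] → ℂ^n` with real start point,
encoded as functions `ℝ → ℂ^n` continuous on `[0,1]`. -/
def PathsC (n : ℕ) : Set (ℝ → Fin n → ℂ) :=
  {γ | ContinuousOn γ (Set.Icc 0 1) ∧ ∀ ℓ, (γ 0 ℓ).im = 0}

/-- `γ^I([0,1]) ⊆ Ω`. -/
def pathInSlice (n : ℕ) (Ω : Set (Fin n → ℍ)) (I : ℍ) (γ : ℝ → Fin n → ℂ) : Prop :=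
  ∀ t ∈ Set.Icc (0 : ℝ) 1, PsiI n I (γ t) ∈ Ω

/-- The set `𝕊(Ω, γ) = {I ∈ 𝕊 : γ^I ⊆ Ω}`. -/
def sliceUnits (n : ℕ) (Ω : Set (Fin n → ℍ)) (γ : ℝ → Fin n → ℂ) : Set ℍ :=
  {I | I ∈ QS ∧ pathInSlice n Ω I γ}

/-- The set `𝒫(ℂ^n, Ω)`. -/
def PathsIn (n : ℕ) (Ω : Set (Fin n → ℍ)) : Set (ℝ → Fin n → ℂ) :=
  {γ | γ ∈ PathsC n ∧ ∃ I, I ∈ sliceUnits n Ω γ}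

/-- The straight segment `𝓛_z^w(t) = (1 - t)z + tw`. -/
def segPath (n : ℕ) (z w : Fin n → ℂ) : ℝ → Fin n → ℂ :=
  fun t => (1 - t) • z + t • w

/-- Concatenation of paths. -/
def concatP (n : ℕ) (γ δ : ℝ → Fin n → ℂ) : ℝ → Fin n → ℂ :=
  fun t => if t ≤ 1 / 2 then γ (2 * t) else δ (2 * t - 1)

/-- `𝓛_γ(z) := γ ∘ 𝓛_{γ(1)}^z`, the extension of `γ` by the segment from `γ(1)` to `z`. -/
def extendPath (n : ℕ) (γ : ℝ → Fin n → ℂ) (z : Fin n → ℂ) : ℝ → Fin n → ℂ :=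
  concatP n γ (segPath n (γ 1) z)

/-- The ball `B_{𝒫(ℂ^n)}(γ, r)` in path space. -/
def pathBall (n : ℕ) (γ : ℝ → Fin n → ℂ) (r : ℝ) : Set (ℝ → Fin n → ℂ) :=
  {β | ∃ z ∈ Metric.ball (γ 1) r, β = extendPath n γ z}

/-- `B_I(c^I, r) ⊆ Ω_I`, encoded via `Ψ_i^I`. -/
def ballInSlice (n : ℕ) (Ω : Set (Fin n → ℍ)) (I : ℍ) (c : Fin n → ℂ) (r : ℝ) : Prop :=
  ∀ w ∈ Metric.ball c r, PsiI n I w ∈ Ω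

/-- `r_{γ,Ω}`, as an extended nonnegative real. -/
def rPath (n : ℕ) (Ω : Set (Fin n → ℍ)) (γ : ℝ → Fin n → ℂ) : ℝ≥0∞ :=
  sSup {x : ℝ≥0∞ | ∃ r : ℝ≥0, x = r ∧ pathBall n γ r ⊆ PathsIn n Ω}

/-- `r^{𝕊'}_{γ,Ω}`, as an extended nonnegative real. -/
def rSliceSet (n : ℕ) (Ω : Set (Fin n → ℍ)) (γ : ℝ → Fin n → ℂ) (S' : Set ℍ) : ℝ≥0∞ :=
  sSup {x : ℝ≥0∞ | ∃ r : ℝ≥0, x = r ∧ ∀ I ∈ S', ballInSlice n Ω I (γ 1) r}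

/-- `r²_{γ,Ω}`, as an extended nonnegative real. -/
def r2Slice (n : ℕ) (Ω : Set (Fin n → ℍ)) (γ : ℝ → Fin n → ℂ) : ℝ≥0∞ :=
  sSup {x : ℝ≥0∞ | ∃ S'' : Set ℍ, S'' ⊆ sliceUnits n Ω γ ∧ S''.Nontrivial ∧ x = rSliceSet n Ω γ S''}

/-- `r^I_{γ,Ω}`, as an extended nonnegative real. -/
def rISlice (n : ℕ) (Ω : Set (Fin n → ℍ)) (γ : ℝ → Fin n → ℂ) (I : ℍ) : ℝ≥0∞ :=
  sSup {x : ℝ≥0∞ | ∃ r : ℝ≥0, x = r ∧ ballInSlice n Ω I (γ 1) r}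

/-- `Ω` is real-path-connected. -/
def realPathConnected (n : ℕ) (Ω : Set (Fin n → ℍ)) : Prop :=
  ∀ q ∈ Ω, ∃ γ ∈ PathsIn n Ω, ∃ I ∈ sliceUnits n Ω γ, PsiI n I (γ 1) = q

/-- `Ω₂` is `Ω₁`-stem-preserving. -/
def stemPreserving (n : ℕ) (Ω₁ Ω₂ : Set (Fin n → ℍ)) : Prop :=
  (∀ γ ∈ PathsIn n Ω₁, (sliceUnits n Ω₂ γ).Nontrivial) ∧
  (∀ α ∈ PathsIn n Ω₁, ∀ β ∈ PathsIn n Ω₁, α 1 = β 1 →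
    ¬ ∃ I, sliceUnits n Ω₂ α ∩ sliceUnits n Ω₂ β = {I})

/-- `F : 𝒫(ℂ^n, Ω) → ℍ^{2×1}` is a (path-slice) stem function of `f`:
`f(γ^I(1)) = (1, I)·F(γ)`. -/
def isStemOf (n : ℕ) (Ω : Set (Fin n → ℍ)) (f : (Fin n → ℍ) → ℍ)
    (F : (ℝ → Fin n → ℂ) → ℍ × ℍ) : Prop :=
  ∀ γ ∈ PathsIn n Ω, ∀ I ∈ sliceUnits n Ω γ, f (PsiI n I (γ 1)) = (F γ).1 + I * (F γ).2

/-- `f` is a path-slice function on `Ω`. -/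
def PathSliceFn (n : ℕ) (Ω : Set (Fin n → ℍ)) (f : (Fin n → ℍ) → ℍ) : Prop :=
  ∃ F, isStemOf n Ω f F

/-- `f` is (weakly) slice regular on `Ω`: each restriction `f_I` is real differentiable
and satisfies the Cauchy-Riemann equations `(∂/∂x_ℓ + I ∂/∂y_ℓ) f_I = 0`. -/
def SliceRegular (n : ℕ) (Ω : Set (Fin n → ℍ)) (f : (Fin n → ℍ) → ℍ) : Prop :=
  ∀ I ∈ QS,
    DifferentiableOn ℝ (fun z => f (PsiI n I z)) (PsiI n I ⁻¹' Ω) ∧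
    ∀ z ∈ PsiI n I ⁻¹' Ω, ∀ ℓ : Fin n,
      fderivWithin ℝ (fun z => f (PsiI n I z)) (PsiI n I ⁻¹' Ω) z (Pi.single ℓ 1)
        + I * fderivWithin ℝ (fun z => f (PsiI n I z)) (PsiI n I ⁻¹' Ω) z
            (Pi.single ℓ Complex.I) = 0

open Classical in
/-- `F_{Ω₁}^f` : a choice of stem function of the path-slice function `f : Ω₂ → ℍ`
(its restriction to `𝒫(ℂ^n, Ω₁)` is independent of the choice). -/
def stemF (n : ℕ) (Ω₂ : Set (Fin n → ℍ)) (f : (Fin n → ℍ) → ℍ) :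
    (ℝ → Fin n → ℂ) → ℍ × ℍ :=
  if h : ∃ F, isStemOf n Ω₂ f F then h.choose else fun _ => 0

open Classical in
/-- The map `ℑ : ℍ_s^n → 𝕊 ∪ {0}`. -/
def scrI {n : ℕ} (q : Fin n → ℍ) : ℍ :=
  if h : (Finset.univ.filter fun ℓ : Fin n => Quaternion.im (q ℓ) ≠ 0).Nonempty then
    ‖Quaternion.im (q ((Finset.univ.filter
        fun ℓ : Fin n => Quaternion.im (q ℓ) ≠ 0).min' h))‖⁻¹ •
      Quaternion.im (q ((Finset.univ.filter
        fun ℓ : Fin n => Quaternion.im (q ℓ) ≠ 0).min' h))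
  else 0

open Classical in
/-- The map `ℱ_{Ω₁}^g : Ω₁ → ℍ^{2×1}`. -/
def scrF (n : ℕ) (Ω₁ Ω₂ : Set (Fin n → ℍ)) (g : (Fin n → ℍ) → ℍ) (q : Fin n → ℍ) :
    ℍ × ℍ :=
  if h : (∃ ℓ, Quaternion.im (q ℓ) ≠ 0) ∧
      ∃ γ, γ ∈ PathsIn n Ω₁ ∧ pathInSlice n Ω₁ (scrI q) γ ∧ PsiI n (scrI q) (γ 1) = q then
    stemF n Ω₂ g h.2.choose
  else (g q, 0)

/-- The `*`-product `(f*g)(q) = (f(q), ℑ(q)f(q))·ℱ_{Ω₁}^g(q)`. -/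
def starProd (n : ℕ) (Ω₁ Ω₂ : Set (Fin n → ℍ)) (f g : (Fin n → ℍ) → ℍ) :
    (Fin n → ℍ) → ℍ :=
  fun q => f q * (scrF n Ω₁ Ω₂ g q).1 + scrI q * f q * (scrF n Ω₁ Ω₂ g q).2

/-- Componentwise complex conjugate of a path. -/
def conjPath (n : ℕ) (γ : ℝ → Fin n → ℂ) : ℝ → Fin n → ℂ :=
  fun t ℓ => starRingEnd ℂ (γ t ℓ)

end

/-!
A stem function takes the same value on two paths with a common end point as soon as both paths lie
in the domain for two common imaginary units, because `p₁ + J p₂` at two values of `J` determines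
`(p₁, p₂)`. If two paths lie in the same slice of `Ω₁` and end at the same point, one followed by
the reverse of the other is again a path in `Ω₁`, and stem preservation applied to it provides the
common units. So `ℱ_{Ω₁}^g(q)` may be computed along any path that reaches `q` in the slice of
`ℑ(q)`. For `q = Ψ_i^I(z)` non-real, `ℑ(q) = ±I`. If `ℑ(q) = -I`, one conjugates the path: this
changes the sign of the second stem component, which cancels the sign of `ℑ(q)`. If `q` is real, the
second component vanishes.
-/

section ImaginaryUnits

variable {I : ℍ}

lemma norm_eq_one_of_mem_QS (hI : I ∈ QS) : ‖I‖ = 1 := by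
  have h : ‖I‖ ^ 2 = 1 := by
    rw [← norm_pow, show I ^ 2 = -1 from hI, norm_neg, norm_one]
  exact (pow_eq_one_iff_of_nonneg (norm_nonneg I) two_ne_zero).mp h

lemma ne_zero_of_mem_QS (hI : I ∈ QS) : I ≠ 0 :=
  norm_ne_zero_iff.mp (norm_eq_one_of_mem_QS hI ▸ one_ne_zero)

lemma re_eq_zero_of_mem_QS (hI : I ∈ QS) : I.re = 0 := by
  rw [← Quaternion.sq_eq_neg_normSq, Quaternion.normSq_eq_norm_mul_self, norm_eq_one_of_mem_QS hI,
    show I ^ 2 = -1 from hI]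
  simp

lemma neg_mem_QS_iff : -I ∈ QS ↔ I ∈ QS := by
  simp only [QS, Set.mem_ofPred_eq, neg_sq]

end ImaginaryUnits

section SliceCoordinates

variable {n : ℕ} {I : ℍ} {z : Fin n → ℂ} {q : Fin n → ℍ}

lemma re_PsiI (hI : I ∈ QS) (z : Fin n → ℂ) (ℓ : Fin n) : (PsiI n I z ℓ).re = (z ℓ).re := by
  simp [PsiI, re_eq_zero_of_mem_QS hI, Quaternion.algebraMap_def]

lemma im_PsiI (hI : I ∈ QS) (z : Fin n → ℂ) (ℓ : Fin n) :
    (PsiI n I z ℓ).im = (z ℓ).im • I := by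
  ext <;> simp [PsiI, re_eq_zero_of_mem_QS hI, Quaternion.algebraMap_def]

lemma im_PsiI_ne_zero_iff (hI : I ∈ QS) (z : Fin n → ℂ) (ℓ : Fin n) :
    (PsiI n I z ℓ).im ≠ 0 ↔ (z ℓ).im ≠ 0 := by
  rw [im_PsiI hI, smul_ne_zero_iff_left (ne_zero_of_mem_QS hI)]

lemma PsiI_injective (hI : I ∈ QS) : Function.Injective (PsiI n I) := by
  intro z w h
  funext ℓ
  apply Complex.ext
  · rw [← re_PsiI hI z, h, re_PsiI hI]
  · apply smul_left_injective ℝ (ne_zero_of_mem_QS hI)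
    simp only [← im_PsiI hI, h]

lemma PsiI_eq_PsiI_of_im_eq_zero (hz : ∀ ℓ, (z ℓ).im = 0) (I J : ℍ) :
    PsiI n I z = PsiI n J z := by
  funext ℓ
  simp only [PsiI, hz, zero_smul]

lemma exists_im_ne_zero_of_scrI_ne_zero (hq : scrI q ≠ 0) : ∃ ℓ, (q ℓ).im ≠ 0 := by
  contrapose! hq
  simp [scrI, hq]

open Classical in
lemma exists_scrI_eq_inv_norm_smul_im (hq : ∃ ℓ, (q ℓ).im ≠ 0) :
    ∃ ℓ, (q ℓ).im ≠ 0 ∧ scrI q = ‖(q ℓ).im‖⁻¹ • (q ℓ).im := by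
  have h : (Finset.univ.filter fun ℓ : Fin n => (q ℓ).im ≠ 0).Nonempty := by
    simpa [Finset.filter_nonempty_iff] using hq
  exact ⟨_, (Finset.mem_filter.mp (Finset.min'_mem _ h)).2, dif_pos h⟩

lemma scrI_PsiI_eq_or_eq_neg (hI : I ∈ QS) (hz : ∃ ℓ, (z ℓ).im ≠ 0) :
    scrI (PsiI n I z) = I ∨ scrI (PsiI n I z) = -I := by
  obtain ⟨ℓ, hℓ, h⟩ := exists_scrI_eq_inv_norm_smul_im (q := PsiI n I z)
    (hz.imp fun ℓ => (im_PsiI_ne_zero_iff hI z ℓ).mpr)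
  rw [im_PsiI_ne_zero_iff hI] at hℓ
  rw [h, im_PsiI hI, norm_smul, norm_eq_one_of_mem_QS hI, mul_one, smul_smul, Real.norm_eq_abs]
  rcases abs_choice (z ℓ).im with habs | habs <;> rw [habs]
  · exact .inl (by rw [inv_mul_cancel₀ hℓ, one_smul])
  · exact .inr (by rw [inv_neg, neg_mul, inv_mul_cancel₀ hℓ, neg_one_smul])

end SliceCoordinates

section Paths

variable {n : ℕ} {Ω : Set (Fin n → ℍ)} {I : ℍ} {α β γ : ℝ → Fin n → ℂ}

/-- The path `γ` traversed backwards, for paths parametrized by `[0, 1]`. -/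
def reversePath (n : ℕ) (γ : ℝ → Fin n → ℂ) : ℝ → Fin n → ℂ := fun t => γ (1 - t)

lemma continuousOn_reversePath (hγ : ContinuousOn γ (Set.Icc 0 1)) :
    ContinuousOn (reversePath n γ) (Set.Icc 0 1) :=
  hγ.comp (by fun_prop) fun _ => Set.Icc.mem_iff_one_sub_mem.mp

lemma sliceUnits_reversePath : sliceUnits n Ω (reversePath n γ) = sliceUnits n Ω γ := by
  ext J
  refine and_congr_right fun _ => ⟨fun h t ht => ?_, fun h t ht => ?_⟩
  · simpa only [reversePath, sub_sub_cancel] using h (1 - t) (Set.Icc.mem_iff_one_sub_mem.mp ht)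
  · exact h (1 - t) (Set.Icc.mem_iff_one_sub_mem.mp ht)

lemma continuousOn_concatP (hα : ContinuousOn α (Set.Icc 0 1)) (hβ : ContinuousOn β (Set.Icc 0 1))
    (h : α 1 = β 0) : ContinuousOn (concatP n α β) (Set.Icc 0 1) := by
  have hunion : Set.Icc (0 : ℝ) 1 = Set.Icc 0 (1 / 2) ∪ Set.Icc (1 / 2) 1 :=
    (Set.Icc_union_Icc_eq_Icc (by norm_num) (by norm_num)).symm
  have hleft : ContinuousOn (fun t : ℝ => α (2 * t)) (Set.Icc 0 (1 / 2)) :=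
    hα.comp (by fun_prop) fun t ht => ⟨by linarith [ht.1], by linarith [ht.2]⟩
  have hright : ContinuousOn (fun t : ℝ => β (2 * t - 1)) (Set.Icc (1 / 2) 1) :=
    hβ.comp (by fun_prop) fun t ht => ⟨by linarith [ht.1], by linarith [ht.2]⟩
  rw [hunion]
  refine (hleft.congr fun t ht => if_pos ht.2).union_of_isClosed
    (hright.congr fun t ht => ?_) isClosed_Icc isClosed_Icc
  rcases ht.1.eq_or_lt with rfl | hlt
  · norm_num [concatP, h]
  · exact if_neg hlt.not_ge

lemma concatP_mem_PathsC (hα : α ∈ PathsC n) (hβ : ContinuousOn β (Set.Icc 0 1))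
    (h : α 1 = β 0) : concatP n α β ∈ PathsC n :=
  ⟨continuousOn_concatP hα.1 hβ h, fun ℓ => by simpa [concatP] using hα.2 ℓ⟩

lemma pathInSlice_concatP_iff (h : α 1 = β 0) :
    pathInSlice n Ω I (concatP n α β) ↔ pathInSlice n Ω I α ∧ pathInSlice n Ω I β := by
  refine ⟨fun hc => ⟨fun t ht => ?_, fun t ht => ?_⟩, fun ⟨hα, hβ⟩ t ht => ?_⟩
  · have hmem := hc (t / 2) ⟨by linarith [ht.1], by linarith [ht.2]⟩
    rwa [concatP, if_pos (by linarith [ht.2]), mul_div_cancel₀ t two_ne_zero] at hmem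
  · rcases ht.1.eq_or_lt with rfl | hlt
    · have hmem := hc (1 / 2) (by norm_num)
      rwa [concatP, if_pos le_rfl, mul_one_div_cancel two_ne_zero, h] at hmem
    · have hmem := hc ((t + 1) / 2) ⟨by linarith, by linarith [ht.2]⟩
      rwa [concatP, if_neg (by linarith), mul_div_cancel₀ _ two_ne_zero, add_sub_cancel_right]
        at hmem
  · by_cases hhalf : t ≤ 1 / 2
    · rw [concatP, if_pos hhalf]
      exact hα _ ⟨by linarith [ht.1], by linarith⟩
    · rw [concatP, if_neg hhalf]
      exact hβ _ ⟨by linarith, by linarith [ht.2]⟩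

lemma sliceUnits_concatP (h : α 1 = β 0) :
    sliceUnits n Ω (concatP n α β) = sliceUnits n Ω α ∩ sliceUnits n Ω β := by
  ext J
  simp only [sliceUnits, Set.mem_inter_iff, Set.mem_ofPred_eq, pathInSlice_concatP_iff h]
  exact and_and_left

lemma conjPath_mem_PathsC (hγ : γ ∈ PathsC n) : conjPath n γ ∈ PathsC n :=
  ⟨continuousOn_pi.mpr fun ℓ =>
      Complex.continuous_conj.comp_continuousOn (continuousOn_pi.mp hγ.1 ℓ),
    fun ℓ => by simp [conjPath, hγ.2 ℓ]⟩

lemma PsiI_conjPath (I : ℍ) (γ : ℝ → Fin n → ℂ) (t : ℝ) :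
    PsiI n I (conjPath n γ t) = PsiI n (-I) (γ t) := by
  funext ℓ
  simp [PsiI, conjPath]

lemma mem_sliceUnits_conjPath_iff :
    I ∈ sliceUnits n Ω (conjPath n γ) ↔ -I ∈ sliceUnits n Ω γ := by
  simp only [sliceUnits, pathInSlice, Set.mem_ofPred_eq, PsiI_conjPath, neg_mem_QS_iff]

end Paths

section SegmentExtension

variable {n : ℕ} {Ω : Set (Fin n → ℍ)} {I : ℍ} {γ : ℝ → Fin n → ℂ} {z w : Fin n → ℂ} {r : ℝ}

lemma segPath_zero (z w : Fin n → ℂ) : segPath n z w 0 = z := by simp [segPath]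

lemma segPath_one (z w : Fin n → ℂ) : segPath n z w 1 = w := by simp [segPath]

lemma continuous_segPath (z w : Fin n → ℂ) : Continuous (segPath n z w) := by
  unfold segPath
  fun_prop

lemma extendPath_one (γ : ℝ → Fin n → ℂ) (z : Fin n → ℂ) : extendPath n γ z 1 = z := by
  norm_num [extendPath, concatP, segPath_one]

lemma extendPath_mem_PathsC (hγ : γ ∈ PathsC n) (z : Fin n → ℂ) : extendPath n γ z ∈ PathsC n :=
  concatP_mem_PathsC hγ (continuous_segPath _ _).continuousOn (segPath_zero _ _).symm

lemma pathInSlice_segPath (hball : ballInSlice n Ω I z r) (hw : w ∈ Metric.ball z r) :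
    pathInSlice n Ω I (segPath n z w) := fun t ht =>
  hball _ <| convex_ball z r (Metric.mem_ball_self (Metric.pos_of_mem_ball hw)) hw
    (sub_nonneg.mpr ht.2) ht.1 (sub_add_cancel 1 t)

lemma mem_sliceUnits_extendPath (hI : I ∈ sliceUnits n Ω γ) (hball : ballInSlice n Ω I (γ 1) r)
    (hz : z ∈ Metric.ball (γ 1) r) : I ∈ sliceUnits n Ω (extendPath n γ z) := by
  rw [extendPath, sliceUnits_concatP (segPath_zero _ _).symm]
  exact ⟨hI, hI.1, pathInSlice_segPath hball hz⟩

lemma ballInSlice_of_ofReal_lt_rISlice (hr : ENNReal.ofReal r < rISlice n Ω γ I) :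
    ballInSlice n Ω I (γ 1) r := by
  obtain ⟨_, ⟨s, rfl, hs⟩, hrs⟩ := lt_sSup_iff.mp hr
  have hle : r ≤ s := (Real.le_coe_toNNReal r).trans (ENNReal.coe_le_coe.mp hrs.le)
  exact fun w hw => hs w (Metric.ball_subset_ball hle hw)

end SegmentExtension

section StemFunctions

lemma eq_of_add_mul_eq_add_mul {R : Type*} [Ring R] [NoZeroDivisors R] {x y : R} {p q : R × R}
    (hxy : x ≠ y) (hx : p.1 + x * p.2 = q.1 + x * q.2) (hy : p.1 + y * p.2 = q.1 + y * q.2) :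
    p = q := by
  have hmul : (x - y) * (p.2 - q.2) = 0 := by
    calc (x - y) * (p.2 - q.2)
        = (p.1 + x * p.2 - (q.1 + x * q.2)) - (p.1 + y * p.2 - (q.1 + y * q.2)) := by noncomm_ring
      _ = 0 := by rw [hx, hy, sub_self, sub_self, sub_self]
  have hsnd : p.2 = q.2 :=
    sub_eq_zero.mp ((mul_eq_zero.mp hmul).resolve_left (sub_ne_zero.mpr hxy))
  rw [hsnd] at hx
  exact Prod.ext (add_right_cancel hx) hsnd

variable {n : ℕ} {Ω Ω₁ Ω₂ : Set (Fin n → ℍ)} {I : ℍ} {α β γ : ℝ → Fin n → ℂ}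
  {g : (Fin n → ℍ) → ℍ} {F : (ℝ → Fin n → ℂ) → ℍ × ℍ} {q : Fin n → ℍ}

lemma PathSliceFn.isStemOf_stemF (hg : PathSliceFn n Ω g) : isStemOf n Ω g (stemF n Ω g) := by
  unfold PathSliceFn at hg
  rw [stemF, dif_pos hg]
  exact hg.choose_spec

lemma isStemOf.eq_of_nontrivial (hF : isStemOf n Ω g F) (hγ : γ ∈ PathsC n) {S : Set ℍ}
    (hS : S.Nontrivial) (hSγ : S ⊆ sliceUnits n Ω γ) {p : ℍ × ℍ}
    (hp : ∀ J ∈ S, g (PsiI n J (γ 1)) = p.1 + J * p.2) : F γ = p := by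
  obtain ⟨J, hJ, K, hK, hJK⟩ := hS
  have hFγ : ∀ L ∈ S, (F γ).1 + L * (F γ).2 = p.1 + L * p.2 := fun L hL =>
    (hF γ ⟨hγ, L, hSγ hL⟩ L (hSγ hL)).symm.trans (hp L hL)
  exact eq_of_add_mul_eq_add_mul hJK (hFγ J hJ) (hFγ K hK)

lemma isStemOf.apply_eq_of_im_eq_zero (hF : isStemOf n Ω g F) (hγ : γ ∈ PathsC n)
    (hS : (sliceUnits n Ω γ).Nontrivial) (hreal : ∀ ℓ, (γ 1 ℓ).im = 0) (I : ℍ) :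
    F γ = (g (PsiI n I (γ 1)), 0) :=
  hF.eq_of_nontrivial hγ hS subset_rfl fun J _ => by
    rw [mul_zero, add_zero, PsiI_eq_PsiI_of_im_eq_zero hreal J I]

lemma isStemOf.apply_conjPath (hF : isStemOf n Ω g F) (hγ : γ ∈ PathsC n)
    (hS : (sliceUnits n Ω (conjPath n γ)).Nontrivial) :
    F (conjPath n γ) = ((F γ).1, -(F γ).2) :=
  hF.eq_of_nontrivial (conjPath_mem_PathsC hγ) hS subset_rfl fun J hJ => by
    rw [mem_sliceUnits_conjPath_iff] at hJ
    rw [PsiI_conjPath, hF γ ⟨hγ, -J, hJ⟩ (-J) hJ, neg_mul_comm]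

lemma nontrivial_sliceUnits_inter (hsp : ∀ γ ∈ PathsIn n Ω₁, (sliceUnits n Ω₂ γ).Nontrivial)
    (hα : α ∈ PathsC n) (hβ : β ∈ PathsC n) (hIα : I ∈ sliceUnits n Ω₁ α)
    (hIβ : I ∈ sliceUnits n Ω₁ β) (hend : α 1 = β 1) :
    (sliceUnits n Ω₂ α ∩ sliceUnits n Ω₂ β).Nontrivial := by
  have hjoin : α 1 = reversePath n β 0 := by rw [hend, reversePath, sub_zero]
  have hloop : ∀ Ω, sliceUnits n Ω (concatP n α (reversePath n β)) =
      sliceUnits n Ω α ∩ sliceUnits n Ω β := fun Ω => by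
    rw [sliceUnits_concatP hjoin, sliceUnits_reversePath]
  rw [← hloop]
  exact hsp _ ⟨concatP_mem_PathsC hα (continuousOn_reversePath hβ.1) hjoin, I,
    hloop Ω₁ ▸ ⟨hIα, hIβ⟩⟩

lemma isStemOf.eq_of_end_eq (hF : isStemOf n Ω₂ g F)
    (hsp : ∀ γ ∈ PathsIn n Ω₁, (sliceUnits n Ω₂ γ).Nontrivial)
    (hα : α ∈ PathsC n) (hβ : β ∈ PathsC n) (hIα : I ∈ sliceUnits n Ω₁ α)
    (hIβ : I ∈ sliceUnits n Ω₁ β) (hend : α 1 = β 1) : F α = F β :=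
  hF.eq_of_nontrivial hα (nontrivial_sliceUnits_inter hsp hα hβ hIα hIβ hend)
    Set.inter_subset_left fun J hJ => by
      rw [hend, hF β ⟨hβ, J, hJ.2⟩ J hJ.2]

lemma scrF_of_im_eq_zero (hq : ∀ ℓ, (q ℓ).im = 0) : scrF n Ω₁ Ω₂ g q = (g q, 0) :=
  dif_neg fun h => h.1.elim fun ℓ hℓ => hℓ (hq ℓ)

lemma scrF_eq_stemF (hsp : ∀ γ ∈ PathsIn n Ω₁, (sliceUnits n Ω₂ γ).Nontrivial)
    (hg : PathSliceFn n Ω₂ g) (hγ : γ ∈ PathsC n) (hqγ : scrI q ∈ sliceUnits n Ω₁ γ)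
    (hend : PsiI n (scrI q) (γ 1) = q) : scrF n Ω₁ Ω₂ g q = stemF n Ω₂ g γ := by
  have h : (∃ ℓ, (q ℓ).im ≠ 0) ∧ ∃ γ, γ ∈ PathsIn n Ω₁ ∧ pathInSlice n Ω₁ (scrI q) γ ∧
      PsiI n (scrI q) (γ 1) = q :=
    ⟨exists_im_ne_zero_of_scrI_ne_zero (ne_zero_of_mem_QS hqγ.1), γ, ⟨hγ, _, hqγ⟩, hqγ.2, hend⟩
  obtain ⟨hα, hqα, hαend⟩ := h.2.choose_spec
  rw [scrF, dif_pos h]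
  exact hg.isStemOf_stemF.eq_of_end_eq hsp hα.1 hγ ⟨hqγ.1, hqα⟩ hqγ
    (PsiI_injective hqγ.1 (hαend.trans hend.symm))

end StemFunctions

theorem statement6_general {n : ℕ} {Ω₁ Ω₂ : Set (Fin n → ℍ)}
    (hsp : ∀ γ ∈ PathsIn n Ω₁, (sliceUnits n Ω₂ γ).Nontrivial)
    (f : (Fin n → ℍ) → ℍ) {g : (Fin n → ℍ) → ℍ} (hg : PathSliceFn n Ω₂ g)
    {γ : ℝ → Fin n → ℂ} (hγ : γ ∈ PathsC n) {I : ℍ} (hI : I ∈ sliceUnits n Ω₁ γ) :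
    starProd n Ω₁ Ω₂ f g (PsiI n I (γ 1))
      = f (PsiI n I (γ 1)) * (stemF n Ω₂ g γ).1
        + I * f (PsiI n I (γ 1)) * (stemF n Ω₂ g γ).2 := by
  have hstem := hg.isStemOf_stemF
  by_cases hreal : ∀ ℓ, (γ 1 ℓ).im = 0
  · have hq : ∀ ℓ, (PsiI n I (γ 1) ℓ).im = 0 := fun ℓ => by rw [im_PsiI hI.1, hreal, zero_smul]
    rw [starProd, scrF_of_im_eq_zero hq,
      hstem.apply_eq_of_im_eq_zero hγ (hsp γ ⟨hγ, I, hI⟩) hreal I]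
    simp only [mul_zero]
  · rcases scrI_PsiI_eq_or_eq_neg hI.1 (not_forall.mp hreal) with hscr | hscr
    · rw [starProd, scrF_eq_stemF hsp hg hγ (hscr.symm ▸ hI) (by rw [hscr]), hscr]
    · have hconj : -I ∈ sliceUnits n Ω₁ (conjPath n γ) := by
        rwa [mem_sliceUnits_conjPath_iff, neg_neg]
      have hconjC := conjPath_mem_PathsC hγ
      rw [starProd, scrF_eq_stemF hsp hg hconjC (hscr.symm ▸ hconj)
          (by rw [hscr, PsiI_conjPath, neg_neg]),
        hstem.apply_conjPath hγ (hsp _ ⟨hconjC, -I, hconj⟩), hscr]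
      simp only [neg_mul, mul_neg, neg_neg]

theorem statement6 (n : ℕ) (hn : 1 ≤ n) (Ω₁ Ω₂ : Set (Fin n → ℍ))
    (hΩ₁ : sliceOpen n Ω₁) (hrc : realPathConnected n Ω₁)
    (hΩ₂ : sliceOpen n Ω₂) (hsp : stemPreserving n Ω₁ Ω₂)
    (f g : (Fin n → ℍ) → ℍ) (hf : PathSliceFn n Ω₁ f) (hg : PathSliceFn n Ω₂ g)
    (γ : ℝ → Fin n → ℂ) (hγ : γ ∈ PathsIn n Ω₁) (I : ℍ) (hI : I ∈ sliceUnits n Ω₁ γ)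
    (r : ℝ) (hr : 0 < r) (hrI : ENNReal.ofReal r < rISlice n Ω₁ γ I)
    (z : Fin n → ℂ) (hz : z ∈ Metric.ball (γ 1) r) :
    starProd n Ω₁ Ω₂ f g (PsiI n I z)
      = f (PsiI n I z) * (stemF n Ω₂ g (extendPath n γ z)).1
        + I * f (PsiI n I z) * (stemF n Ω₂ g (extendPath n γ z)).2 := by
  simpa only [extendPath_one] using statement6_general hsp.1 f hg (extendPath_mem_PathsC hγ.1 z)
    (mem_sliceUnits_extendPath hI (ballInSlice_of_ofReal_lt_rISlice hrI) hz)
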